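/- arXiv:2203.03641 — 2 statements merged into one kernel-verified Lean document; each statement's English description precedes it below -/
import Mathlib

section
/- Let A be a sliding finite-dimensional F-algebra, S a finite generating set of A, and (m_1, …, m_d) the characteristic sequence of S. Then m_{j+1} − m_j ≤ 1 for all j = 1, …, d−1; equivalently, for every k ≥ 1 with L_k(S) ≠ A one has dim L_{k+1}(S) > dim L_k(S). -/
/-!
Framework: length of finite-dimensional not necessarily associative,
not necessarily unital algebras (non-unital convention: `L_0(S) = 0`).
The multiplication of the algebra is passed explicitly as a binary
operation `μ`, so that the same definitions apply to an algebra, to its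
commutator algebra, to a Lie bracket, etc.
-/

open Submodule Module

/-- `IsWord μ S k w`: `w` is a product of `k` elements of `S` (with respect to the
multiplication `μ`) with some placement of parentheses. -/
inductive IsWord {A : Type*} (μ : A → A → A) (S : Set A) : ℕ → A → Prop
  | base {a : A} (ha : a ∈ S) : IsWord μ S 1 a
  | mul {m n : ℕ} {a b : A} (ha : IsWord μ S m a) (hb : IsWord μ S n b) :
      IsWord μ S (m + n) (μ a b)

/-- The multiplication of an algebra, as a plain binary operation. -/
def amul (A : Type*) [Mul A] : A → A → A := fun a b => a * b

section
variable (F : Type*) {A : Type*} [Field F] [AddCommGroup A] [Module F A]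

/-- `L_i(S)`: the linear span of all words in `S` of length at most `i`
(non-unital convention, so `L_0(S) = 0`). -/
def Lset (μ : A → A → A) (S : Set A) (i : ℕ) : Submodule F A :=
  Submodule.span F {a | ∃ k, k ≤ i ∧ IsWord μ S k a}

/-- `S` generates the algebra, i.e. the span of all words in `S` is everything. -/
def Generates (μ : A → A → A) (S : Set A) : Prop :=
  Submodule.span F {a | ∃ k, IsWord μ S k a} = ⊤

/-- `l(S)`: the length of a generating set `S`, the least `k` with `L_k(S) = A`. -/
noncomputable def lenSet (μ : A → A → A) (S : Set A) : ℕ :=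
  sInf {k | Lset F μ S k = ⊤}

/-- An irreducible word of length `k` in `S`. -/
def IrredWord (μ : A → A → A) (S : Set A) (k : ℕ) (w : A) : Prop :=
  IsWord μ S k w ∧ ∀ m, m < k → w ∉ Lset F μ S m

end

section
variable {A : Type*}

/-- The set `P(x,y,z)` of monomials. -/
def Pset (μ : A → A → A) (x y z : A) : Set A :=
  {μ (μ x z) y, μ (μ z x) y, μ (μ y z) x, μ (μ z y) x,
   μ x (μ z y), μ x (μ y z), μ y (μ x z), μ y (μ z x),
   μ x y, μ y x, μ x z, μ z x, μ y z, μ z y, x, y, z}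

/-- The set `Q_l(x,y,z)` of monomials. -/
def Qlset (μ : A → A → A) (x y z : A) : Set A :=
  {μ x (μ z y), μ x (μ y z), μ y (μ x z), μ y (μ z x),
   μ x y, μ y x, μ x z, μ z x, μ y z, μ z y, x, y, z}

/-- The set `Q_r(x,y,z)` of monomials. -/
def Qrset (μ : A → A → A) (x y z : A) : Set A :=
  {μ (μ x z) y, μ (μ z x) y, μ (μ y z) x, μ (μ z y) x,
   μ x y, μ y x, μ x z, μ z x, μ y z, μ z y, x, y, z}

end

section
variable (F : Type*) {A : Type*} [Field F] [AddCommGroup A] [Module F A]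

/-- A mixing algebra: `(xy)z` and `z(xy)` lie in the span of `P(x,y,z)`. -/
def IsMixing (μ : A → A → A) : Prop :=
  ∀ x y z : A, μ (μ x y) z ∈ Submodule.span F (Pset μ x y z) ∧
    μ z (μ x y) ∈ Submodule.span F (Pset μ x y z)

/-- A sliding algebra: either `z(xy)` always lies in the span of `Q_r(x,y,z)`, or
`(xy)z` always lies in the span of `Q_l(x,y,z)`. -/
def IsSliding (μ : A → A → A) : Prop :=
  (∀ x y z : A, μ z (μ x y) ∈ Submodule.span F (Qrset μ x y z)) ∨
  (∀ x y z : A, μ (μ x y) z ∈ Submodule.span F (Qlset μ x y z))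

end

section
variable {F A : Type*}

lemma IsWord.length_pos {μ : A → A → A} {S : Set A} {n : ℕ} {w : A}
    (h : IsWord μ S n w) : 0 < n := by
  induction h <;> omega

/-- Words for the opposite multiplication are the same as words for the multiplication. -/
lemma IsWord.flip {μ : A → A → A} {S : Set A} {n : ℕ} {w : A}
    (h : IsWord μ S n w) : IsWord (flip μ) S n w := by
  induction h with
  | base ha => exact .base ha
  | mul _ _ iha ihb => exact Nat.add_comm _ _ ▸ IsWord.mul ihb iha

lemma Qrset_eq_Qlset_flip (μ : A → A → A) (x y z : A) :
    Qrset μ x y z = Qlset (flip μ) y x z := by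
  ext t
  simp only [Qrset, Qlset, flip, Set.mem_insert_iff, Set.mem_singleton_iff]
  tauto

variable [Field F] [AddCommGroup A] [Module F A]

/-- Assume `(xy)z ∈ span Q_l(x,y,z)`. A subspace containing `S` and stable under left
multiplication by elements of `S` contains every word in `S`. -/
lemma IsWord.mem_of_left_stable {μ : A → A → A} {S : Set A} {M : Submodule F A}
    (hμ : ∀ x y z : A, μ (μ x y) z ∈ span F (Qlset μ x y z))
    (hS : S ⊆ M) (hM : ∀ s ∈ S, ∀ m ∈ M, μ s m ∈ M) {n : ℕ} {w : A}
    (hw : IsWord μ S n w) : w ∈ M := by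
  induction n using Nat.strong_induction_on generalizing w with
  | _ n ih =>
    have hmul : ∀ p q : ℕ, p + q = n → ∀ a b : A,
        IsWord μ S p a → IsWord μ S q b → μ a b ∈ M := by
      intro p
      induction p using Nat.strong_induction_on with
      | _ p ihp =>
        intro q hpq a z ha hz
        cases ha with
        | base ha => exact hM a ha z (ih q (by omega) hz)
        | @mul i j x y hx hy =>
          have hi := hx.length_pos
          have hj := hy.length_pos
          have hq := hz.length_pos
          refine span_le.2 ?_ (hμ x y z)
          rintro t (rfl | rfl | rfl | rfl | rfl | rfl | rfl | rfl | rfl | rfl | rfl | rfl | rfl)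
          · exact ihp i (by omega) (q + j) (by omega) _ _ hx (hz.mul hy)
          · exact ihp i (by omega) (j + q) (by omega) _ _ hx (hy.mul hz)
          · exact ihp j (by omega) (i + q) (by omega) _ _ hy (hx.mul hz)
          · exact ihp j (by omega) (q + i) (by omega) _ _ hy (hz.mul hx)
          · exact ih _ (by omega) (hx.mul hy)
          · exact ih _ (by omega) (hy.mul hx)
          · exact ih _ (by omega) (hx.mul hz)
          · exact ih _ (by omega) (hz.mul hx)
          · exact ih _ (by omega) (hy.mul hz)
          · exact ih _ (by omega) (hz.mul hy)
          · exact ih _ (by omega) hx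
          · exact ih _ (by omega) hy
          · exact ih _ (by omega) hz
    cases hw with
    | base ha => exact hS ha
    | mul ha hb => exact hmul _ _ rfl _ _ ha hb

/-- Assume `z(xy) ∈ span Q_r(x,y,z)`. A subspace containing `S` and stable under right
multiplication by elements of `S` contains every word in `S`. -/
lemma IsWord.mem_of_right_stable {μ : A → A → A} {S : Set A} {M : Submodule F A}
    (hμ : ∀ x y z : A, μ z (μ x y) ∈ span F (Qrset μ x y z))
    (hS : S ⊆ M) (hM : ∀ s ∈ S, ∀ m ∈ M, μ m s ∈ M) {n : ℕ} {w : A}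
    (hw : IsWord μ S n w) : w ∈ M :=
  hw.flip.mem_of_left_stable
    (fun x y z => Qrset_eq_Qlset_flip μ y x z ▸ hμ y x z) hS hM

lemma Lset_mono (μ : A → A → A) (S : Set A) : Monotone (Lset F μ S) :=
  fun _ _ hij => span_mono fun _ ⟨k, hk, h⟩ => ⟨k, hk.trans hij, h⟩

end

section
variable {F B : Type*} [Field F] [NonUnitalNonAssocRing B] [Module F B]

lemma mul_mem_Lset_succ_left [SMulCommClass F B B] {S : Set B} {k : ℕ} {s m : B}
    (hs : s ∈ S) (hm : m ∈ Lset F (amul B) S k) : s * m ∈ Lset F (amul B) S (k + 1) := by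
  induction hm using span_induction with
  | mem w hw =>
    obtain ⟨i, hi, hw⟩ := hw
    exact subset_span ⟨1 + i, by omega, (IsWord.base hs).mul hw⟩
  | zero => simp
  | add x y _ _ hx hy => simpa only [mul_add] using add_mem hx hy
  | smul c x _ hx => simpa only [mul_smul_comm] using smul_mem _ c hx

lemma mul_mem_Lset_succ_right [IsScalarTower F B B] {S : Set B} {k : ℕ} {s m : B}
    (hs : s ∈ S) (hm : m ∈ Lset F (amul B) S k) : m * s ∈ Lset F (amul B) S (k + 1) := by
  induction hm using span_induction with
  | mem w hw =>
    obtain ⟨i, hi, hw⟩ := hw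
    exact subset_span ⟨i + 1, by omega, hw.mul (IsWord.base hs)⟩
  | zero => simp
  | add x y _ _ hx hy => simpa only [add_mul] using add_mem hx hy
  | smul c x _ hx => simpa only [smul_mul_assoc] using smul_mem _ c hx

end

/-- for a sliding algebra, consecutive terms of the characteristic sequence
of a finite generating set `S` differ by at most `1`; equivalently, for every `k ≥ 1`
with `L_k(S) ≠ A` one has `dim L_{k+1}(S) > dim L_k(S)`. -/
theorem sliding_char_seq_steps_le_one
    {F B : Type*} [Field F] [NonUnitalNonAssocRing B] [Module F B]
    [SMulCommClass F B B] [IsScalarTower F B B] [FiniteDimensional F B]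
    (hslide : IsSliding F (amul B))
    (S : Set B) (hSfin : S.Finite) (hSgen : Generates F (amul B) S) :
    ∀ k : ℕ, 1 ≤ k → Lset F (amul B) S k ≠ ⊤ →
      finrank F (Lset F (amul B) S k) < finrank F (Lset F (amul B) S (k + 1)) := by
  intro k hk hne
  refine finrank_lt_finrank_of_lt
    (lt_of_le_of_ne (Lset_mono _ _ k.le_succ) fun heq => hne ?_)
  have hS : S ⊆ Lset F (amul B) S k := fun s hs => subset_span ⟨1, hk, .base hs⟩
  rw [eq_top_iff, ← hSgen]
  refine span_le.2 ?_
  rintro w ⟨n, hw⟩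
  rcases hslide with h | h
  · exact hw.mem_of_right_stable h hS fun s hs m hm => heq ▸ mul_mem_Lset_succ_right hs hm
  · exact hw.mem_of_left_stable h hS fun s hs m hm => heq ▸ mul_mem_Lset_succ_left hs hm
end

section
/- Every finite-dimensional Novikov algebra over a field F is mixing; consequently, every finite-dimensional Novikov algebra A of dimension d ≥ 2 satisfies l(A) ≤ d. -/
/-!
Framework: length of finite-dimensional not necessarily associative,
not necessarily unital algebras (non-unital convention: `L_0(S) = 0`).
The multiplication of the algebra is passed explicitly as a binary
operation `μ`, so that the same definitions apply to an algebra, to its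
commutator algebra, to a Lie bracket, etc.
-/

open Submodule Module

theorem IsWord.one_le {A : Type*} {μ : A → A → A} {S : Set A} {k : ℕ} {w : A}
    (h : IsWord μ S k w) : 1 ≤ k := by
  induction h with
  | base => exact le_rfl
  | mul _ _ iha _ => omega

theorem IsWord.mem_of_length_one {A : Type*} {μ : A → A → A} {S : Set A} {w : A}
    (h : IsWord μ S 1 w) : w ∈ S := by
  generalize hk : 1 = k at h
  cases h with
  | base ha => exact ha
  | mul ha hb =>
    have := ha.one_le
    have := hb.one_le
    omega

theorem IsWord.exists_mul_of_two_le {A : Type*} {μ : A → A → A} {S : Set A} {k : ℕ} {w : A}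
    (h : IsWord μ S k w) (hk : 2 ≤ k) :
    ∃ m n a b, IsWord μ S m a ∧ IsWord μ S n b ∧ m + n = k ∧ μ a b = w := by
  cases h with
  | base => omega
  | mul ha hb => exact ⟨_, _, _, _, ha, hb, rfl, rfl⟩

section Length

variable {F A : Type*} [Field F] [AddCommGroup A] [Module F A] {μ : A → A → A} {S : Set A}

theorem IsWord.mem_Lset {k i : ℕ} {w : A} (h : IsWord μ S k w) (hk : k ≤ i) :
    w ∈ Lset F μ S i :=
  subset_span ⟨k, hk, h⟩

theorem Lset_mono_s14 {i j : ℕ} (h : i ≤ j) : Lset F μ S i ≤ Lset F μ S j :=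
  span_mono fun _ ⟨k, hk, hw⟩ => ⟨k, hk.trans h, hw⟩

/-- If the chain `L_i(S)` stabilizes at its first repetition, then the length of a generating
set is bounded by the dimension. -/
theorem lenSet_le_finrank_of_stable [FiniteDimensional F A] (hS : Generates F μ S)
    (hstab : ∀ k, Lset F μ S k = Lset F μ S (k + 1) →
      ∀ n w, IsWord μ S n w → w ∈ Lset F μ S k) :
    lenSet F μ S ≤ finrank F A := by
  have key : ∀ k, Lset F μ S k = ⊤ ∨ k ≤ finrank F (Lset F μ S k) := by
    intro k
    induction k with
    | zero => exact Or.inr (Nat.zero_le _)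
    | succ k ih =>
      by_cases heq : Lset F μ S k = Lset F μ S (k + 1)
      · left
        rw [← heq, eq_top_iff, ← show _ = ⊤ from hS, span_le]
        rintro w ⟨n, hw⟩
        exact hstab k heq n w hw
      · have hlt := lt_of_le_of_ne (Lset_mono_s14 (F := F) (μ := μ) (S := S) k.le_succ) heq
        rcases ih with htop | hle
        · exact absurd hlt (htop ▸ not_top_lt)
        · exact Or.inr (hle.trans_lt (Submodule.finrank_lt_finrank_of_lt hlt))
  refine Nat.sInf_le ?_
  rcases key (finrank F A) with h | h
  · exact h
  · exact Submodule.eq_top_of_finrank_eq (le_antisymm (Submodule.finrank_le _) h)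

end Length

section Novikov

variable {F B : Type*} [Field F] [NonUnitalNonAssocRing B] [Module F B]

theorem novikov_isMixing
    (h1 : ∀ x y z : B, x * (y * z) - (x * y) * z = y * (x * z) - (y * x) * z)
    (h2 : ∀ x y z : B, (x * y) * z = (x * z) * y) :
    IsMixing F (amul B) := by
  intro x y z
  constructor
  · refine subset_span ?_
    simp only [amul, Pset]
    rw [h2 x y z]
    exact Set.mem_insert _ _
  · have hexp : amul B z (amul B x y) =
        amul B x (amul B z y) - amul B (amul B x z) y + amul B (amul B z x) y :=
      sub_eq_iff_eq_add.mp (h1 z x y)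
    rw [hexp]
    refine add_mem (sub_mem ?_ ?_) ?_ <;> exact subset_span (by simp [Pset])

variable [IsScalarTower F B B]

/-- In a Novikov algebra every word of length at least two is a linear combination of words of
the same length having a generator as the leftmost or the rightmost factor. -/
theorem IsWord.mem_span_generator_mul
    (h1 : ∀ x y z : B, x * (y * z) - (x * y) * z = y * (x * z) - (y * x) * z)
    (h2 : ∀ x y z : B, (x * y) * z = (x * z) * y) {S : Set B} (n : ℕ) (w : B)
    (hw : IsWord (amul B) S (n + 2) w) :
    w ∈ span F {a | ∃ s ∈ S, ∃ v, IsWord (amul B) S (n + 1) v ∧ (a = s * v ∨ a = v * s)} := by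
  induction n using Nat.strong_induction_on generalizing w with
  | _ n ih =>
    have key : ∀ m j u v, IsWord (amul B) S (m + 1) u → IsWord (amul B) S j v →
        m + 1 + j = n + 2 → u * v ∈ span F
          {a | ∃ s ∈ S, ∃ v, IsWord (amul B) S (n + 1) v ∧ (a = s * v ∨ a = v * s)} := by
      intro m
      induction m with
      | zero =>
        intro j u v hu hv hj
        obtain rfl : j = n + 1 := by omega
        exact subset_span ⟨u, hu.mem_of_length_one, v, hv, Or.inl rfl⟩
      | succ m ihm =>
        intro j u v hu hv hj
        have hj1 := hv.one_le
        have hspan := ih m (by omega) u hu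
        clear hu
        induction hspan using span_induction with
        | zero => simp
        | add a b _ _ ha hb => rw [add_mul]; exact add_mem ha hb
        | smul c a _ ha => rw [smul_mul_assoc]; exact smul_mem _ c ha
        | mem a ha =>
          obtain ⟨s, hs, w, hw, rfl | rfl⟩ := ha
          · have hexp : s * w * v = s * (w * v) - w * (s * v) + (w * v) * s := by
              rw [h2 w v s, ← sub_sub_cancel (s * (w * v)) (s * w * v), h1 s w v]
              abel
            have hwv : IsWord (amul B) S (n + 1) (w * v) := by
              have := hw.mul hv
              rwa [show m + 1 + j = n + 1 by omega] at this
            have hsv := (IsWord.base (μ := amul B) hs).mul hv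
            rw [hexp]
            exact add_mem (sub_mem (subset_span ⟨s, hs, _, hwv, Or.inl rfl⟩)
              (ihm _ w _ hw hsv (by omega))) (subset_span ⟨s, hs, _, hwv, Or.inr rfl⟩)
          · have hwv : IsWord (amul B) S (n + 1) (w * v) := by
              have := hw.mul hv
              rwa [show m + 1 + j = n + 1 by omega] at this
            rw [h2]
            exact subset_span ⟨s, hs, _, hwv, Or.inr rfl⟩
    obtain ⟨m, j, u, v, hu, hv, hmj, rfl⟩ := hw.exists_mul_of_two_le (by omega)
    obtain ⟨m, rfl⟩ : ∃ k, m = k + 1 := ⟨m - 1, by have := hu.one_le; omega⟩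
    exact key m j u v hu hv hmj

variable [SMulCommClass F B B]

theorem generator_mul_mem_Lset_succ {S : Set B} {s x : B} {k : ℕ} (hs : s ∈ S)
    (hx : x ∈ Lset F (amul B) S k) :
    s * x ∈ Lset F (amul B) S (k + 1) ∧ x * s ∈ Lset F (amul B) S (k + 1) := by
  rw [Lset] at hx
  induction hx using span_induction with
  | zero => simp
  | add a b _ _ ha hb =>
    rw [mul_add, add_mul]
    exact ⟨add_mem ha.1 hb.1, add_mem ha.2 hb.2⟩
  | smul c a _ ha =>
    rw [mul_smul_comm, smul_mul_assoc]
    exact ⟨smul_mem _ c ha.1, smul_mem _ c ha.2⟩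
  | mem a ha =>
    obtain ⟨n, hn, ha⟩ := ha
    have hs' := IsWord.base (μ := amul B) hs
    exact ⟨(hs'.mul ha).mem_Lset (by omega), (ha.mul hs').mem_Lset (by omega)⟩

theorem novikov_mem_Lset_of_Lset_eq_succ
    (h1 : ∀ x y z : B, x * (y * z) - (x * y) * z = y * (x * z) - (y * x) * z)
    (h2 : ∀ x y z : B, (x * y) * z = (x * z) * y) {S : Set B} {k : ℕ}
    (hk : Lset F (amul B) S k = Lset F (amul B) S (k + 1)) (n : ℕ) (w : B)
    (hw : IsWord (amul B) S n w) : w ∈ Lset F (amul B) S k := by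
  induction n generalizing w with
  | zero => exact absurd hw.one_le (by omega)
  | succ n ih =>
    cases n with
    | zero =>
      rw [hk]
      exact hw.mem_Lset (by omega)
    | succ n =>
      refine span_le.mpr ?_ (hw.mem_span_generator_mul (F := F) h1 h2)
      rintro _ ⟨s, hs, v, hv, rfl | rfl⟩ <;> rw [hk]
      · exact (generator_mul_mem_Lset_succ hs (ih v hv)).1
      · exact (generator_mul_mem_Lset_succ hs (ih v hv)).2

end Novikov

/-- every finite-dimensional Novikov algebra is mixing; consequently every
finite-dimensional Novikov algebra of dimension `d ≥ 2` has length at most `d`. -/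
theorem novikov_isMixing_and_length_le_dim
    {F B : Type*} [Field F] [NonUnitalNonAssocRing B] [Module F B]
    [SMulCommClass F B B] [IsScalarTower F B B] [FiniteDimensional F B]
    (h1 : ∀ x y z : B, x * (y * z) - (x * y) * z = y * (x * z) - (y * x) * z)
    (h2 : ∀ x y z : B, (x * y) * z = (x * z) * y) :
    IsMixing F (amul B) ∧
    (2 ≤ finrank F B →
      ∀ S : Set B, S.Finite → Generates F (amul B) S →
        lenSet F (amul B) S ≤ finrank F B) := by
  exact ⟨novikov_isMixing h1 h2, fun _ _ _ hS =>
    lenSet_le_finrank_of_stable hS fun _ hk => novikov_mem_Lset_of_Lset_eq_succ h1 h2 hk⟩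
end
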